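/- arXiv:0901.1678 — 2 statements merged into one kernel-verified Lean document; each statement's English description precedes it below -/
import Mathlib

section
/- For every odd n ≥ 5 of the form 4t+1, the ideal (x_1,...,x_n) is an associated prime of (I^∨)^2, where I = (x_1x_2x_3, x_3x_4x_5, ..., x_{n-2}x_{n-1}x_n, x_nx_1x_2) is the edge ideal of the cyclic 3-hypergraph on n vertices. -/
/-!
Write `J` for the dual ideal and `v j` for the vertex `2 j`, `0 ≤ j ≤ 2 t`. The `2 t + 1` edges form
an odd cycle in which the vertices `v j` link consecutive edges: `v j` lies in the edges `j - 1`
and `j` (cyclically). The witness is the monomial `w = ∏ j, X (v j)`, of degree `2 t + 1`.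

* `w ∉ J ^ 2`. Every vertex lies in at most two edges, so a monomial meeting all `2 t + 1` edges has
  degree at least `t + 1`. Hence `J ≤ 𝔪 ^ (t + 1)` and `J ^ 2 ≤ 𝔪 ^ (2 t + 2)`, where `𝔪` is the
  ideal of the variables (`dualIdeal_cyc3_le`), while `w` has degree `2 t + 1`.
* `X i * w ∈ J ^ 2` for all `i`. Pick an edge `k` containing `i`. Going around the cycle from edge
  `k`, the vertices `v j` split alternately into two classes: one has `t + 1` elements and meets
  every edge, the other has `t` elements and meets every edge except `k`, which `i` then meets.

So the annihilator of the class of `w` is a proper ideal containing the maximal ideal `𝔪`, hence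
equal to it.
-/

open MvPolynomial Finset

noncomputable section

/-- A `k`-cover of a hypergraph with edge set `E`: a nonzero tuple whose entries
sum to at least `k` over every edge. -/
def IsCover {V : Type*} (E : Finset (Finset V)) (k : ℕ) (a : V → ℕ) : Prop :=
  a ≠ 0 ∧ ∀ e ∈ E, k ≤ ∑ i ∈ e, a i

/-- `a` is a sum of two 1-covers. -/
def SumTwoOneCovers {V : Type*} (E : Finset (Finset V)) (a : V → ℕ) : Prop :=
  ∃ b c : V → ℕ, IsCover E 1 b ∧ IsCover E 1 c ∧ a = b + c

/-- An independent set: no edge is contained in `S`. -/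
def IsIndep {V : Type*} (E : Finset (Finset V)) (S : Finset V) : Prop :=
  ∀ e ∈ E, ¬ e ⊆ S

/-- `i` is in the neighborhood of `S`: `i ∉ S` and some edge consists of `i`
together with vertices of `S`. -/
def InNbhd {V : Type*} (E : Finset (Finset V)) (S : Finset V) (i : V) : Prop :=
  i ∉ S ∧ ∃ e ∈ E, i ∈ e ∧ ∀ j ∈ e, j ≠ i → j ∈ S

open Classical in
/-- The 2-cover `A_S` attached to an independent set `S`:
`0` on `S`, `2` on `N(S)`, and `1` elsewhere. -/
noncomputable def indepCover {V : Type*} (E : Finset (Finset V)) (S : Finset V) : V → ℕ :=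
  fun i => if i ∈ S then 0 else if InNbhd E S i then 2 else 1

/-- The Alexander dual of the edge ideal: `⋂_{edges e} (x_i : i ∈ e)`. -/
noncomputable def dualIdeal {V : Type*} (K : Type*) [Field K] (E : Finset (Finset V)) :
    Ideal (MvPolynomial V K) :=
  ⨅ e ∈ E, Ideal.span (X '' (e : Set V))

/-- The monomial `x_1^{a_1} ⋯ x_n^{a_n}` attached to a tuple `a`. -/
noncomputable def coverMonomial {V : Type*} [Fintype V] (K : Type*) [Field K] (a : V → ℕ) :
    MvPolynomial V K :=
  ∏ i, X i ^ a i

/-- Connectedness of a hypergraph: any two vertices are linked by a chain of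
vertices in which consecutive vertices share an edge. -/
def HConnected {V : Type*} (E : Finset (Finset V)) : Prop :=
  ∀ x y : V, ∃ l : List V, l.head? = some x ∧ l.getLast? = some y ∧
    l.Chain' fun a b => ∃ e ∈ E, a ∈ e ∧ b ∈ e

/-- The cyclic 3-hypergraph with edges `{x_1,x_2,x_3}, {x_3,x_4,x_5}, …`
(0-based: `{2j, 2j+1, 2j+2}` modulo `n`). -/
def cyc3 (n : ℕ) (hn : 0 < n) : Finset (Finset (Fin n)) :=
  (Finset.range ((n + 1) / 2)).image fun j =>
    ({⟨(2 * j) % n, Nat.mod_lt _ hn⟩, ⟨(2 * j + 1) % n, Nat.mod_lt _ hn⟩,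
      ⟨(2 * j + 2) % n, Nat.mod_lt _ hn⟩} : Finset (Fin n))

/-- The alternating tuple: `1` on odd vertices `x_1, x_3, …` (0-based even
indices), `0` on even vertices. -/
def altCover (n : ℕ) : Fin n → ℕ :=
  fun i => if (i : ℕ) % 2 = 0 then 1 else 0

/-- The `j`-th edge of `cyc3 n`. -/
def cycEdge (n : ℕ) (hn : 0 < n) (j : ℕ) : Finset (Fin n) :=
  {⟨(2 * j) % n, Nat.mod_lt _ hn⟩, ⟨(2 * j + 1) % n, Nat.mod_lt _ hn⟩,
    ⟨(2 * j + 2) % n, Nat.mod_lt _ hn⟩}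

/-- The vertex `2 j` of `cyc3 n` (modulo `n`), shared by the edges `j - 1` and `j`. -/
def linkVertex (n : ℕ) (hn : 0 < n) (j : ℕ) : Fin n := ⟨(2 * j) % n, Nat.mod_lt _ hn⟩

lemma mem_cyc3_iff {n t : ℕ} (hn : n = 4 * t + 1) (h0 : 0 < n) (e : Finset (Fin n)) :
    e ∈ cyc3 n h0 ↔ ∃ j < 2 * t + 1, cycEdge n h0 j = e := by
  have h : (n + 1) / 2 = 2 * t + 1 := by omega
  simp [cyc3, cycEdge, h]

/-- Membership in an edge with the reduction modulo `n` carried out: only the last edge wraps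
around. -/
lemma mem_cycEdge_iff {n t : ℕ} (hn : n = 4 * t + 1) (ht : 1 ≤ t) (h0 : 0 < n) {j : ℕ}
    (hj : j < 2 * t + 1) (i : Fin n) :
    i ∈ cycEdge n h0 j ↔
      (j < 2 * t ∧ ((i : ℕ) = 2 * j ∨ (i : ℕ) = 2 * j + 1 ∨ (i : ℕ) = 2 * j + 2)) ∨
      (j = 2 * t ∧ ((i : ℕ) = 4 * t ∨ (i : ℕ) = 0 ∨ (i : ℕ) = 1)) := by
  simp only [cycEdge, Finset.mem_insert, Finset.mem_singleton, Fin.ext_iff]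
  rcases Nat.lt_or_ge j (2 * t) with h | h
  · rw [Nat.mod_eq_of_lt (by omega : 2 * j < n), Nat.mod_eq_of_lt (by omega : 2 * j + 1 < n),
      Nat.mod_eq_of_lt (by omega : 2 * j + 2 < n)]
    omega
  · obtain rfl : j = 2 * t := by omega
    have h1 : (2 * (2 * t) + 1) % n = 0 := by
      rw [show 2 * (2 * t) + 1 = n by omega, Nat.mod_self]
    have h2 : (2 * (2 * t) + 2) % n = 1 := by
      rw [show 2 * (2 * t) + 2 = n + 1 by omega, Nat.add_mod_left, Nat.mod_eq_of_lt (by omega)]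
    rw [Nat.mod_eq_of_lt (by omega : 2 * (2 * t) < n), h1, h2]
    omega

lemma card_edges_through_le {n t : ℕ} (hn : n = 4 * t + 1) (ht : 1 ≤ t) (h0 : 0 < n) (i : Fin n) :
    ((range (2 * t + 1)).filter fun j => i ∈ cycEdge n h0 j).card ≤ 2 := by
  -- Only the edge `i / 2` and its cyclic predecessor can contain `i`; for `i ≤ 1` the latter is
  -- the wrapping edge `2 t`.
  have hsub : ((range (2 * t + 1)).filter fun j => i ∈ cycEdge n h0 j) ⊆
      {(i : ℕ) / 2, if (i : ℕ) ≤ 1 then 2 * t else (i : ℕ) / 2 - 1} := by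
    intro j hj
    rw [Finset.mem_filter, Finset.mem_range] at hj
    have h := (mem_cycEdge_iff hn ht h0 hj.1 i).1 hj.2
    rw [Finset.mem_insert, Finset.mem_singleton]
    split_ifs <;> omega
  exact (Finset.card_le_card hsub).trans Finset.card_le_two

/-- Double counting of incidences: a monomial meeting every edge has degree at least `t + 1`. -/
lemma lt_degree_of_cover {n t : ℕ} (hn : n = 4 * t + 1) (ht : 1 ≤ t) (h0 : 0 < n)
    (a : Fin n →₀ ℕ) (ha : ∀ j < 2 * t + 1, ∃ i ∈ cycEdge n h0 j, a i ≠ 0) :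
    t + 1 ≤ a.degree := by
  have h1 : 2 * t + 1 ≤ ∑ j ∈ range (2 * t + 1), ∑ i ∈ cycEdge n h0 j, a i := by
    have h := Finset.card_nsmul_le_sum (range (2 * t + 1))
      (fun j => ∑ i ∈ cycEdge n h0 j, a i) 1 ?_
    · simpa using h
    · intro j hj
      obtain ⟨i, hi, hai⟩ := ha j (Finset.mem_range.1 hj)
      exact (Nat.one_le_iff_ne_zero.2 hai).trans
        (Finset.single_le_sum (f := fun i => a i) (fun _ _ => Nat.zero_le _) hi)
  have h2 : ∑ j ∈ range (2 * t + 1), ∑ i ∈ cycEdge n h0 j, a i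
      = ∑ i, ((range (2 * t + 1)).filter fun j => i ∈ cycEdge n h0 j).card * a i := by
    rw [Finset.sum_comm' (t' := Finset.univ)
      (s' := fun i => (range (2 * t + 1)).filter fun j => i ∈ cycEdge n h0 j) (by simp)]
    simp
  have h3 : ∑ i, ((range (2 * t + 1)).filter fun j => i ∈ cycEdge n h0 j).card * a i
      ≤ ∑ i, 2 * a i :=
    Finset.sum_le_sum fun i _ => Nat.mul_le_mul_right _ (card_edges_through_le hn ht h0 i)
  rw [← Finset.mul_sum, ← Finsupp.degree_eq_sum] at h3
  omega

lemma dualIdeal_cyc3_le (K : Type*) [Field K] {n t : ℕ} (hn : n = 4 * t + 1) (ht : 1 ≤ t)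
    (h0 : 0 < n) :
    dualIdeal K (cyc3 n h0) ≤ idealOfVars (Fin n) K ^ (t + 1) := by
  intro p hp
  rw [mem_pow_idealOfVars_iff]
  intro a ha
  refine lt_degree_of_cover hn ht h0 a fun j hj => ?_
  simp only [dualIdeal, Ideal.mem_iInf] at hp
  exact mem_ideal_span_X_image.1 (hp _ ((mem_cyc3_iff hn h0 _).2 ⟨j, hj, rfl⟩)) a ha

lemma idealOfVars_isMaximal (σ K : Type*) [Field K] : (idealOfVars σ K).IsMaximal := by
  have h : idealOfVars σ K = RingHom.ker (constantCoeff (σ := σ) (R := K)) := by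
    ext p
    rw [← pow_one (idealOfVars σ K), mem_pow_idealOfVars_iff', RingHom.mem_ker]
    simp [constantCoeff_eq, Finsupp.degree_eq_zero_iff]
  rw [h]
  exact RingHom.ker_isMaximal_of_surjective _ fun c => ⟨C c, by simp⟩

lemma mem_dualIdeal_cyc3 (K : Type*) [Field K] {n t : ℕ} (hn : n = 4 * t + 1) (h0 : 0 < n)
    (p : MvPolynomial (Fin n) K)
    (h : ∀ j < 2 * t + 1, ∃ i ∈ cycEdge n h0 j, X i ∣ p) :
    p ∈ dualIdeal K (cyc3 n h0) := by
  simp only [dualIdeal, Ideal.mem_iInf]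
  intro e he
  obtain ⟨j, hj, rfl⟩ := (mem_cyc3_iff hn h0 e).1 he
  obtain ⟨i, hi, hd⟩ := h j hj
  exact Ideal.mem_of_dvd _ hd (Ideal.subset_span ⟨i, hi, rfl⟩)

lemma linkVertex_mem (n : ℕ) (h0 : 0 < n) (j : ℕ) : linkVertex n h0 j ∈ cycEdge n h0 j := by
  simp [linkVertex, cycEdge]

lemma linkVertex_succ_mem (n : ℕ) (h0 : 0 < n) (j : ℕ) :
    linkVertex n h0 (j + 1) ∈ cycEdge n h0 j := by
  simp [linkVertex, cycEdge, mul_add]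

lemma linkVertex_zero_mem {n t : ℕ} (hn : n = 4 * t + 1) (h0 : 0 < n) :
    linkVertex n h0 0 ∈ cycEdge n h0 (2 * t) := by
  have : (2 * (2 * t) + 1) % n = 0 := by rw [show 2 * (2 * t) + 1 = n by omega, Nat.mod_self]
  simp [linkVertex, cycEdge, this]

/-- A set of link vertices `v j`, given by a set `P` of indices, meets the edge `j` as soon as
`P` contains `j` or its cyclic successor. -/
lemma exists_dvd_prod (K : Type*) [Field K] {n t : ℕ} (hn : n = 4 * t + 1) (h0 : 0 < n)
    (P : ℕ → Prop) [DecidablePred P] {j : ℕ} (hj : j < 2 * t + 1)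
    (h : P j ∨ (j < 2 * t ∧ P (j + 1)) ∨ (j = 2 * t ∧ P 0)) :
    ∃ i ∈ cycEdge n h0 j, (X i : MvPolynomial (Fin n) K) ∣
      ∏ j ∈ (range (2 * t + 1)).filter P, X (linkVertex n h0 j) := by
  have key : ∀ l < 2 * t + 1, P l → (X (linkVertex n h0 l) : MvPolynomial (Fin n) K) ∣
      ∏ j ∈ (range (2 * t + 1)).filter P, X (linkVertex n h0 j) := fun l hl hP =>
    Finset.dvd_prod_of_mem (fun j => (X (linkVertex n h0 j) : MvPolynomial (Fin n) K))
      (Finset.mem_filter.2 ⟨Finset.mem_range.2 hl, hP⟩)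
  rcases h with h | ⟨h1, h⟩ | ⟨rfl, h⟩
  · exact ⟨_, linkVertex_mem n h0 j, key j hj h⟩
  · exact ⟨_, linkVertex_succ_mem n h0 j, key _ (by omega) h⟩
  · exact ⟨_, linkVertex_zero_mem hn h0, key 0 (by omega) h⟩

lemma X_mul_prod_mem_sq (K : Type*) [Field K] {n t : ℕ} (hn : n = 4 * t + 1) (ht : 1 ≤ t)
    (h0 : 0 < n) (i : Fin n) :
    (X i * ∏ j ∈ range (2 * t + 1), X (linkVertex n h0 j) : MvPolynomial (Fin n) K) ∈
      dualIdeal K (cyc3 n h0) ^ 2 := by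
  obtain ⟨k, hk, hik⟩ : ∃ k < 2 * t + 1, i ∈ cycEdge n h0 k := by
    have hi := i.isLt
    refine ⟨(i : ℕ) / 2, by omega, (mem_cycEdge_iff hn ht h0 (by omega) i).2 (by omega)⟩
  -- The indices at odd distance from `k` when counting `k + 1, …, 2 t, 0, …, k`; the last of
  -- these, `k` itself, is at distance `2 t + 1`.
  let P : ℕ → Prop := fun j => (k < j ∧ (j + k) % 2 = 1) ∨ (j ≤ k ∧ (j + k) % 2 = 0)
  have : DecidablePred P := Classical.decPred P
  rw [← Finset.prod_filter_mul_prod_filter_not (range (2 * t + 1)) P, mul_left_comm, pow_two]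
  refine Ideal.mul_mem_mul (mem_dualIdeal_cyc3 K hn h0 _ fun j hj => ?_)
    (mem_dualIdeal_cyc3 K hn h0 _ fun j hj => ?_)
  · exact exists_dvd_prod K hn h0 P hj (by simp only [P]; omega)
  · by_cases hjk : j = k
    · subst hjk
      exact ⟨i, hik, dvd_mul_right _ _⟩
    · obtain ⟨l, hl, hd⟩ := exists_dvd_prod K hn h0 (fun j => ¬ P j) hj (by simp only [P]; omega)
      exact ⟨l, hl, hd.mul_left _⟩

lemma prod_notMem_sq (K : Type*) [Field K] {n t : ℕ} (hn : n = 4 * t + 1) (ht : 1 ≤ t)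
    (h0 : 0 < n) :
    (∏ j ∈ range (2 * t + 1), X (linkVertex n h0 j) : MvPolynomial (Fin n) K) ∉
      dualIdeal K (cyc3 n h0) ^ 2 := by
  intro h
  have h1 := Ideal.pow_right_mono (dualIdeal_cyc3_le K hn ht h0) 2 h
  rw [← pow_mul, mem_pow_idealOfVars_iff] at h1
  have hhom : (∏ j ∈ range (2 * t + 1), X (linkVertex n h0 j) :
      MvPolynomial (Fin n) K).IsHomogeneous (2 * t + 1) := by
    simpa using IsHomogeneous.prod (range (2 * t + 1))
      (fun j => (X (linkVertex n h0 j) : MvPolynomial (Fin n) K)) (fun _ => 1)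
      (fun j _ => isHomogeneous_X K _)
  have hne : (∏ j ∈ range (2 * t + 1), X (linkVertex n h0 j) : MvPolynomial (Fin n) K) ≠ 0 :=
    Finset.prod_ne_zero_iff.2 fun _ _ => X_ne_zero _
  obtain ⟨a, ha⟩ := support_nonempty.2 hne
  have h2 := h1 a ha
  have h3 := hhom (mem_support_iff.1 ha)
  have h4 : a.degree = Finsupp.weight (1 : Fin n → ℕ) a :=
    DFunLike.congr_fun (Finsupp.degree_eq_weight_one (R := ℕ)) a
  omega

theorem stmt12 {K : Type*} [Field K] {n t : ℕ} (ht : 1 ≤ t) (hn : n = 4 * t + 1) :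
    IsAssociatedPrime
      (Ideal.span (Set.range X) : Ideal (MvPolynomial (Fin n) K))
      (MvPolynomial (Fin n) K ⧸ ((dualIdeal K (cyc3 n (by omega))) ^ 2)) := by
  have h0 : 0 < n := by omega
  have hmax := idealOfVars_isMaximal (Fin n) K
  rw [isAssociatedPrime_iff]
  refine ⟨hmax.isPrime,
    Ideal.Quotient.mk _ (∏ j ∈ range (2 * t + 1), X (linkVertex n h0 j)), ?_⟩
  have hcolon : ∀ r : MvPolynomial (Fin n) K,
      r ∈ Submodule.colon (⊥ : Submodule (MvPolynomial (Fin n) K)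
          (MvPolynomial (Fin n) K ⧸ ((dualIdeal K (cyc3 n h0)) ^ 2)))
        {Ideal.Quotient.mk _ (∏ j ∈ range (2 * t + 1), X (linkVertex n h0 j))} ↔
      r * ∏ j ∈ range (2 * t + 1), X (linkVertex n h0 j) ∈ dualIdeal K (cyc3 n h0) ^ 2 := by
    intro r
    rw [Submodule.mem_colon_singleton, Submodule.mem_bot, ← Ideal.Quotient.eq_zero_iff_mem]
    rfl
  refine hmax.eq_of_le ?_ ?_
  · rw [Ideal.ne_top_iff_one, hcolon, one_mul]
    exact prod_notMem_sq K hn ht h0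
  · rw [Ideal.span_le]
    rintro _ ⟨i, rfl⟩
    exact (hcolon _).2 (X_mul_prod_mem_sq K hn ht h0 i)
end
end

section
/- For every n ≥ 3, there exists a 3-hypergraph H of size n such that (I(H)^∨)^2 has an associated prime of height n (namely the maximal monomial prime (x_1,...,x_n)). -/
/-!
The ideal `J = dualIdeal K E` is monomial, and `x^a ∈ J` exactly when `a` hits every edge.
Hence `x^a ∈ J ^ 2` exactly when `a` is a sum of two such tuples. Consequently, if `a` is not
such a sum but every `a + e_j` is, then the annihilator of the class of `x^a` modulo `J ^ 2`
contains all the variables and is proper, so it is the maximal ideal `(x_1, …, x_n)`.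

For `n ≥ 4` let `k ≥ 3` be the largest odd number below `n`, so that `n - k ∈ {1, 2}`. Take the
`k`-cycle on `0, …, k - 1`, with every graph edge enlarged to a 3-edge: the path edges
`{i, i + 1}` get the vertex `k`, and the closing edge `{k - 1, 0}` gets the vertex `n - 1`.
The tuple `a` is the indicator of the cycle. A decomposition `a = b + c` would be a proper
2-colouring of an odd cycle. For `a + e_j` with `j` on the cycle, the cycle is cut open at `j`,
which lies in both parts; for `j` off the cycle, one part covers through `j` all edges which
contain `j`. For `n = 3` the single edge `{x_1, x_2, x_3}` gives `J = 𝔪` and `a = e_1` works.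
-/


open MvPolynomial Finset

noncomputable section

/-- The tuple `b` has positive sum over every edge of `E` (it may be zero if `E` is empty). -/
def Hits {V : Type*} (E : Finset (Finset V)) (b : V → ℕ) : Prop :=
  ∀ e ∈ E, ∃ i ∈ e, b i ≠ 0

theorem mem_dualIdeal_iff {V K : Type*} [Field K] (E : Finset (Finset V))
    (f : MvPolynomial V K) :
    f ∈ dualIdeal K E ↔ ∀ m ∈ f.support, Hits E m := by
  simp only [dualIdeal, Ideal.mem_iInf, mem_ideal_span_X_image, Hits, Finset.mem_coe]
  exact ⟨fun h m hm e he => h e he m hm, fun h m hm e he => h e he m hm⟩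

theorem monomial_mem_dualIdeal {V K : Type*} [Field K] {E : Finset (Finset V)}
    {b : V →₀ ℕ} (hb : Hits E b) : (monomial b (1 : K)) ∈ dualIdeal K E := by
  rw [mem_dualIdeal_iff]
  intro m hm
  rw [Finset.mem_singleton.1 (support_monomial_subset hm)]
  exact hb

/-- Every monomial occurring in an element of `J ^ 2` is a product of two monomials of `J`. -/
theorem support_of_mem_sq {V K : Type*} [Field K] {E : Finset (Finset V)}
    {f : MvPolynomial V K} (hf : f ∈ dualIdeal K E ^ 2) :
    ∀ m ∈ f.support, ∃ b c : V →₀ ℕ, Hits E b ∧ Hits E c ∧ m = b + c := by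
  classical
  rw [pow_two] at hf
  refine Submodule.mul_induction_on hf ?_ ?_
  · intro p hp q hq m hm
    obtain ⟨b, hb, c, hc, rfl⟩ := Finset.mem_add.1 (support_mul p q hm)
    exact ⟨b, c, (mem_dualIdeal_iff E p).1 hp b hb, (mem_dualIdeal_iff E q).1 hq c hc, rfl⟩
  · intro p q hp hq m hm
    rcases Finset.mem_union.1 (support_add hm) with h | h
    · exact hp m h
    · exact hq m h

theorem span_range_X_isMaximal (V K : Type*) [Field K] :
    (Ideal.span (Set.range X) : Ideal (MvPolynomial V K)).IsMaximal := by
  have h : (Ideal.span (Set.range X) : Ideal (MvPolynomial V K)) =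
      RingHom.ker (constantCoeff : MvPolynomial V K →+* K) := by
    ext f
    rw [← Set.image_univ, mem_ideal_span_X_image, RingHom.mem_ker, constantCoeff_eq]
    constructor
    · intro h
      by_contra h0
      obtain ⟨i, -, hi⟩ := h 0 (mem_support_iff.2 h0)
      exact hi rfl
    · intro h m hm
      by_contra hcon
      push Not at hcon
      have : m = 0 := Finsupp.ext fun i => hcon i (Set.mem_univ i)
      exact mem_support_iff.1 hm (this ▸ h)
  rw [h]
  exact RingHom.ker_isMaximal_of_surjective _ fun r => ⟨C r, constantCoeff_C V r⟩

/-- The combinatorial criterion: a tuple `a` which is not a sum of two covers, but all of whose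
successors `a + e_j` are, makes the maximal monomial ideal an associated prime of `J ^ 2`. -/
theorem isAssociatedPrime_of_witness {V : Type*} [Fintype V] [DecidableEq V]
    {K : Type*} [Field K] (E : Finset (Finset V)) (a : V → ℕ)
    (hno : ∀ b c : V → ℕ, Hits E b → Hits E c → (∀ i, a i = b i + c i) → False)
    (hyes : ∀ j, ∃ b c : V → ℕ, Hits E b ∧ Hits E c ∧
      ∀ i, a i + (if i = j then 1 else 0) = b i + c i) :
    IsAssociatedPrime
      (Ideal.span (Set.range X) : Ideal (MvPolynomial V K))
      (MvPolynomial V K ⧸ ((dualIdeal K E) ^ 2)) := by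
  have hmax := span_range_X_isMaximal V K
  refine (Submodule.isAssociatedPrime_iff (N := ⊥)).2 ⟨hmax.isPrime,
    Ideal.Quotient.mk _ (monomial (Finsupp.equivFunOnFinite.symm a) (1 : K)), ?_⟩
  refine hmax.eq_of_le ?_ ?_
  · intro htop
    have h1 := (Ideal.eq_top_iff_one _).1 htop
    rw [Submodule.mem_colon_singleton, one_smul, Submodule.mem_bot,
      Ideal.Quotient.eq_zero_iff_mem] at h1
    obtain ⟨b, c, hb, hc, h⟩ := support_of_mem_sq h1 (Finsupp.equivFunOnFinite.symm a)
      (by simp [mem_support_iff])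
    exact hno b c hb hc fun i => by simpa using DFunLike.congr_fun h i
  · rw [Ideal.span_le]
    rintro _ ⟨j, rfl⟩
    obtain ⟨b, c, hb, hc, h⟩ := hyes j
    rw [SetLike.mem_coe, Submodule.mem_colon_singleton, Submodule.mem_bot,
      ← Ideal.Quotient.mk_eq_mk, ← Submodule.Quotient.mk_smul, Ideal.Quotient.mk_eq_mk,
      Ideal.Quotient.eq_zero_iff_mem, smul_eq_mul]
    have hm : (X j : MvPolynomial V K) * monomial (Finsupp.equivFunOnFinite.symm a) (1 : K) =
        monomial (Finsupp.equivFunOnFinite.symm b) 1 *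
          monomial (Finsupp.equivFunOnFinite.symm c) 1 := by
      rw [X, monomial_mul, monomial_mul]
      congr 2
      ext i
      simp only [Finsupp.add_apply, Finsupp.equivFunOnFinite_symm_apply_apply,
        Finsupp.single_apply, ← h i, eq_comm (a := j)]
      exact add_comm _ _
    rw [hm, pow_two]
    exact Ideal.mul_mem_mul (monomial_mem_dualIdeal (by simpa [Hits] using hb))
      (monomial_mem_dualIdeal (by simpa [Hits] using hc))

/-- The cycle on `0, …, k - 1` whose path edges are enlarged by the vertex `k` and whose closing
edge `{k - 1, 0}` is enlarged by the vertex `n - 1`. -/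
def oddCycleEdges (n k : ℕ) (hk : 3 ≤ k) (hkn : k < n) : Finset (Finset (Fin n)) :=
  insert {⟨k - 1, by omega⟩, ⟨0, by omega⟩, ⟨n - 1, by omega⟩}
    (Finset.univ.image fun i : Fin (k - 1) =>
      {⟨i, by omega⟩, ⟨i + 1, by omega⟩, ⟨k, hkn⟩})

theorem hits_oddCycleEdges {n k : ℕ} (hk : 3 ≤ k) (hkn : k < n) (f : ℕ → ℕ) :
    Hits (oddCycleEdges n k hk hkn) (fun i => f i) ↔
      (f (k - 1) ≠ 0 ∨ f 0 ≠ 0 ∨ f (n - 1) ≠ 0) ∧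
      ∀ i, i + 1 < k → (f i ≠ 0 ∨ f (i + 1) ≠ 0 ∨ f k ≠ 0) := by
  simp only [Hits, oddCycleEdges, Finset.forall_mem_insert, Finset.forall_mem_image,
    Finset.mem_univ, true_imp_iff, Finset.exists_mem_insert, Finset.mem_singleton,
    exists_eq_left]
  refine and_congr Iff.rfl ⟨fun h i hi => h (x := ⟨i, by omega⟩), fun h i => h i (by omega)⟩

theorem oddCycleEdges_card {n k : ℕ} (hk : 3 ≤ k) (hkn : k < n) :
    ∀ e ∈ oddCycleEdges n k hk hkn, e.card = 3 := by
  simp only [oddCycleEdges, Finset.forall_mem_insert, Finset.forall_mem_image,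
    Finset.mem_univ, true_imp_iff]
  refine ⟨?_, fun i => ?_⟩ <;>
  · rw [Finset.card_eq_three]
    refine ⟨_, _, _, ?_, ?_, ?_, rfl⟩ <;> rw [Ne, Fin.mk.injEq] <;> omega

/-- The odd cycle has no proper 2-colouring: its indicator is not a sum of two covers. -/
theorem oddCycle_not_sum {n k : ℕ} (hk : 3 ≤ k) (hkn : k < n) (hodd : k % 2 = 1)
    (b c : Fin n → ℕ) (hb : Hits (oddCycleEdges n k hk hkn) b)
    (hc : Hits (oddCycleEdges n k hk hkn) c)
    (h : ∀ i : Fin n, (if (i : ℕ) < k then 1 else 0) = b i + c i) : False := by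
  -- Extend `b` and `c` by zero to all of `ℕ`.
  obtain ⟨f, hf⟩ : ∃ f : ℕ → ℕ, b = fun i : Fin n => f i :=
    ⟨fun i => if hi : i < n then b ⟨i, hi⟩ else 0, by ext i; simp⟩
  obtain ⟨g, hg⟩ : ∃ g : ℕ → ℕ, c = fun i : Fin n => g i :=
    ⟨fun i => if hi : i < n then c ⟨i, hi⟩ else 0, by ext i; simp⟩
  subst hf hg
  rw [hits_oddCycleEdges] at hb hc
  have hs : ∀ i, i < n → (if i < k then 1 else 0) = f i + g i := fun i hi => h ⟨i, hi⟩
  have hin : ∀ i, i < k → f i + g i = 1 := fun i hi => by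
    rw [← hs i (by omega), if_pos hi]
  have hk0 := hs k hkn
  have hn0 := hs (n - 1) (by omega)
  rw [if_neg (by omega)] at hk0 hn0
  have halt : ∀ i, 2 * i < k → f (2 * i) = f 0 := by
    intro i
    induction i with
    | zero => intro _; rfl
    | succ i ih =>
      intro hi
      have h0 := ih (by omega)
      have h1 := hb.2 (2 * i) (by omega)
      have h2 := hb.2 (2 * i + 1) (by omega)
      have h3 := hc.2 (2 * i) (by omega)
      have h4 := hc.2 (2 * i + 1) (by omega)
      have h5 := hin (2 * i) (by omega)
      have h6 := hin (2 * i + 1) (by omega)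
      have h7 := hin (2 * i + 1 + 1) (by omega)
      rw [show 2 * (i + 1) = 2 * i + 1 + 1 by ring]
      omega
  have h1 := halt ((k - 1) / 2) (by omega)
  rw [show 2 * ((k - 1) / 2) = k - 1 by omega] at h1
  have h2 := hin 0 (by omega)
  have h3 := hin (k - 1) (by omega)
  have h4 := hb.1
  have h5 := hc.1
  omega

theorem oddCycle_succ_sum {n k : ℕ} (hk : 3 ≤ k) (hkn : k < n) (hodd : k % 2 = 1)
    (hn : n ≤ k + 2) (j : Fin n) :
    ∃ b c : Fin n → ℕ, Hits (oddCycleEdges n k hk hkn) b ∧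
      Hits (oddCycleEdges n k hk hkn) c ∧
      ∀ i : Fin n, (if (i : ℕ) < k then 1 else 0) + (if i = j then 1 else 0) = b i + c i := by
  obtain ⟨j, hj⟩ := j
  suffices h : ∃ f g : ℕ → ℕ,
      ((f (k - 1) ≠ 0 ∨ f 0 ≠ 0 ∨ f (n - 1) ≠ 0) ∧
        ∀ i, i + 1 < k → (f i ≠ 0 ∨ f (i + 1) ≠ 0 ∨ f k ≠ 0)) ∧
      ((g (k - 1) ≠ 0 ∨ g 0 ≠ 0 ∨ g (n - 1) ≠ 0) ∧
        ∀ i, i + 1 < k → (g i ≠ 0 ∨ g (i + 1) ≠ 0 ∨ g k ≠ 0)) ∧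
      ∀ i < n, (if i < k then 1 else 0) + (if i = j then 1 else 0) = f i + g i by
    obtain ⟨f, g, hf, hg, h⟩ := h
    refine ⟨fun i => f i, fun i => g i, (hits_oddCycleEdges hk hkn f).2 hf,
      (hits_oddCycleEdges hk hkn g).2 hg, fun i => ?_⟩
    simpa only [Fin.ext_iff] using h i i.2
  rcases lt_trichotomy j k with hjk | hjk | hjk
  · -- Cut the cycle open at `j`: the colours alternate on both sides, and `j` gets both.
    refine ⟨fun i => if i < k ∧ (i ≤ j ∧ i % 2 = 0 ∨ j ≤ i ∧ i % 2 = 1) then 1 else 0,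
      fun i => if i < k ∧ (i ≤ j ∧ i % 2 = 1 ∨ j ≤ i ∧ i % 2 = 0) then 1 else 0,
      ⟨Or.inr (Or.inl ?_), fun i hi => ?_⟩, ⟨Or.inl ?_, fun i hi => ?_⟩, fun i hi => ?_⟩ <;>
    dsimp only <;> split_ifs <;> omega
  · -- One part is `{0, k}`, the other is the cycle without `0`.
    refine ⟨fun i => if i = 0 ∨ i = k then 1 else 0,
      fun i => if 0 < i ∧ i < k then 1 else 0,
      ⟨Or.inr (Or.inl ?_), fun i hi => ?_⟩, ⟨Or.inl ?_, fun i hi => ?_⟩, fun i hi => ?_⟩ <;>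
    dsimp only <;> split_ifs <;> omega
  · -- Here `j = n - 1` lies on the closing edge, the only one that the odd vertices miss.
    refine ⟨fun i => if i < k ∧ i % 2 = 0 then 1 else 0,
      fun i => if i < k ∧ i % 2 = 1 ∨ i = j then 1 else 0,
      ⟨Or.inr (Or.inl ?_), fun i hi => ?_⟩, ⟨Or.inr (Or.inr ?_), fun i hi => ?_⟩,
      fun i hi => ?_⟩ <;>
    dsimp only <;> split_ifs <;> omega

theorem stmt14 {K : Type*} [Field K] {n : ℕ} (hn : 3 ≤ n) :
    ∃ E : Finset (Finset (Fin n)), (∀ e ∈ E, e.card = 3) ∧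
      IsAssociatedPrime
        (Ideal.span (Set.range X) : Ideal (MvPolynomial (Fin n) K))
        (MvPolynomial (Fin n) K ⧸ ((dualIdeal K E) ^ 2)) := by
  rcases eq_or_lt_of_le hn with rfl | hn4
  · refine ⟨{Finset.univ}, by simp, isAssociatedPrime_of_witness _ ![1, 0, 0] ?_ ?_⟩
    · intro b c hb hc h
      simp only [Hits, Finset.mem_singleton, forall_eq, Finset.mem_univ, true_and,
        Fin.exists_fin_succ, Fin.forall_fin_succ] at hb hc h
      simp at hb hc h
      omega
    · intro j
      refine ⟨![1, 0, 0], fun i => if i = j then 1 else 0, ?_, ?_, fun i => rfl⟩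
      · simp only [Hits, Finset.mem_singleton, forall_eq]
        exact ⟨0, Finset.mem_univ _, by simp⟩
      · simp only [Hits, Finset.mem_singleton, forall_eq]
        exact ⟨j, Finset.mem_univ _, by simp⟩
  · obtain ⟨k, hk, hkn, hodd, hnk⟩ : ∃ k, 3 ≤ k ∧ k < n ∧ k % 2 = 1 ∧ n ≤ k + 2 := by
      rcases Nat.mod_two_eq_zero_or_one n with h | h
      · exact ⟨n - 1, by omega, by omega, by omega, by omega⟩
      · exact ⟨n - 2, by omega, by omega, by omega, by omega⟩
    exact ⟨oddCycleEdges n k hk hkn, oddCycleEdges_card hk hkn,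
      isAssociatedPrime_of_witness _ (fun i => if (i : ℕ) < k then 1 else 0)
        (oddCycle_not_sum hk hkn hodd) (oddCycle_succ_sum hk hkn hodd hnk)⟩
end
end
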